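/- arXiv:2209.08870 — 2 statements merged into one kernel-verified Lean document; each statement's English description precedes it below -/
import Mathlib

section
/- Let A be a unital *-algebra over ℂ, q ∈ (0,1), and z₁, z₂, z₃, z₄ ∈ A elements satisfying the Vaksman–Soibelman S_q^7 relations. Set a = z₁z₄* − z₂z₃*, b = z₁z₃ + q⁻¹z₂z₄, and R = z₁z₁* + z₂z₂*. Then: Ra = q⁻²aR, Rb = q²bR, ab = q³ba, ab* = q⁻¹b*a, aa* + q²bb* = R(1−q²R), aa* = q²a*a + (1−q²)R², and b*b = q⁴bb* + (1−q²)R. -/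
/-- The Vaksman–Soibelman `S_q^7` relations for a 4-tuple of elements of a unital
complex *-algebra. -/
def VSRel {A : Type*} [Ring A] [StarRing A] [Algebra ℂ A] (q : ℝ) (z : Fin 4 → A) : Prop :=
  (∀ i j : Fin 4, i < j → z i * z j = (q : ℂ) • (z j * z i)) ∧
  (∀ i j : Fin 4, i ≠ j → star (z j) * z i = (q : ℂ) • (z i * star (z j))) ∧
  (∀ k : Fin 4, star (z k) * z k
      = z k * star (z k) + (1 - (q : ℂ) ^ 2) • ∑ j ∈ Finset.Iio k, z j * star (z j)) ∧
  ∑ k : Fin 4, z k * star (z k) = 1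

/-!
Products of generators and their adjoints commute up to powers of `q`, except for the pairs
`zₖ*, zₖ`, where `zₖ* zₖ = zₖzₖ* + (1 - q²) ∑_{j<k} zⱼzⱼ*`. Expanding each relation between `a`, `b`
and `R` into products of two monomials, all terms without such a pair match by counting powers of
`q`. In the others the partial sums `∑_{j<k} zⱼzⱼ*` are moved to the left, since they commute with
`zᵢ` for `i < k` and `q²`-commute with it for `i ≥ k`, and the remainders cancel.

The involution is not tied to the scalars, so taking adjoints of `zᵢzⱼ = q zⱼzᵢ` is not immediate:
the image of `q` in the algebra may differ from its adjoint. Comparing `zⱼ* zᵢ = q zᵢzⱼ*` with the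
adjoint of `zᵢ* zⱼ = q zⱼzᵢ*` shows that the central difference annihilates `zᵢzⱼ*` for `i ≠ j`,
and the remaining relations propagate this to `zᵢ` for every non-maximal `i`.
-/

section QCommute

/-- Commutation up to a scalar, `x y = c y x`. -/
def QCommute {K A : Type*} [SMul K A] [Mul A] (c : K) (x y : A) : Prop :=
  x * y = c • (y * x)

namespace QCommute

section CommSemiring

variable {K A : Type*} [CommSemiring K] [Semiring A] [Algebra K A] {c d : K} {x y u v : A}

protected theorem eq (h : QCommute c x y) : x * y = c • (y * x) := h

theorem one_iff_commute : QCommute (1 : K) x y ↔ Commute x y := by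
  rw [QCommute, one_smul, commute_iff_eq]

protected theorem refl (x : A) : QCommute (1 : K) x x :=
  one_iff_commute.2 (Commute.refl x)

theorem of_eq (h : QCommute c x y) (hcd : c = d) : QCommute d x y := hcd ▸ h

theorem mul_left (hx : QCommute c x u) (hy : QCommute d y u) : QCommute (c * d) (x * y) u := by
  rw [QCommute, mul_assoc, hy.eq, mul_smul_comm, ← mul_assoc, hx.eq, smul_mul_assoc, smul_smul,
    mul_assoc, mul_comm c]

theorem mul_right (hu : QCommute c x u) (hv : QCommute d x v) : QCommute (c * d) x (u * v) := by
  rw [QCommute, ← mul_assoc, hu.eq, smul_mul_assoc, mul_assoc, hv.eq, mul_smul_comm, smul_smul,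
    mul_assoc]

theorem mul_mul {e f : K} (hxu : QCommute c x u) (hxv : QCommute d x v) (hyu : QCommute e y u)
    (hyv : QCommute f y v) : QCommute (c * d * (e * f)) (x * y) (u * v) :=
  (hxu.mul_right hxv).mul_left (hyu.mul_right hyv)

theorem add_left (hx : QCommute c x u) (hy : QCommute c y u) : QCommute c (x + y) u := by
  rw [QCommute, add_mul, mul_add, smul_add, hx.eq, hy.eq]

theorem add_right (hu : QCommute c x u) (hv : QCommute c x v) : QCommute c x (u + v) := by
  rw [QCommute, add_mul, mul_add, smul_add, hu.eq, hv.eq]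

theorem smul_right (a : K) (h : QCommute c x u) : QCommute c x (a • u) := by
  rw [QCommute, mul_smul_comm, smul_mul_assoc, h.eq, smul_comm]

theorem smul_left (a : K) (h : QCommute c x u) : QCommute c (a • x) u := by
  rw [QCommute, mul_smul_comm, smul_mul_assoc, h.eq, smul_comm]

theorem sum_left {ι : Type*} {s : Finset ι} {f : ι → A} (h : ∀ i ∈ s, QCommute c (f i) u) :
    QCommute c (∑ i ∈ s, f i) u := by
  rw [QCommute, Finset.sum_mul, Finset.mul_sum, Finset.smul_sum]
  exact Finset.sum_congr rfl h

theorem mul_mul_mul_comm (h : QCommute c x y) (u v : A) :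
    u * x * (y * v) = c • (u * y * (x * v)) := by
  rw [mul_assoc, ← mul_assoc x, h.eq, smul_mul_assoc, mul_smul_comm, mul_assoc y, ← mul_assoc u]

end CommSemiring

theorem sub_right {K A : Type*} [CommSemiring K] [Ring A] [Algebra K A] {c : K} {x u v : A}
    (hu : QCommute c x u) (hv : QCommute c x v) : QCommute c x (u - v) := by
  rw [QCommute, sub_mul, mul_sub, smul_sub, hu.eq, hv.eq]

theorem symm {K A : Type*} [Semifield K] [Semiring A] [Algebra K A] {c : K} {x y : A}
    (h : QCommute c x y) (hc : c ≠ 0) : QCommute c⁻¹ y x := by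
  rw [QCommute, h.eq, inv_smul_smul₀ hc]

end QCommute

end QCommute

section StarDefect

variable {K A : Type*} [CommSemiring K] [Ring A] [Algebra K A] [StarRing A]

/-- The difference between the adjoint of a scalar `c`, viewed in the algebra `A`, and `c` itself.
It measures the failure of `star (c • x) = c • star x`. -/
def starDefect (A : Type*) [Ring A] [Algebra K A] [StarRing A] (c : K) : A :=
  star (algebraMap K A c) - algebraMap K A c

theorem commute_starDefect (c : K) (x : A) : Commute (starDefect A c) x := by
  have hstar : Commute (star (algebraMap K A c)) x := by
    simpa using (Algebra.commute_algebraMap_left c (star x)).star_star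
  exact hstar.sub_left (Algebra.commute_algebraMap_left c x)

theorem star_starDefect (c : K) : star (starDefect A c) = -starDefect A c := by
  simp [starDefect]

theorem star_smul_eq_add_starDefect_mul (c : K) (x : A) :
    star (c • x) = c • star x + starDefect A c * star x := by
  rw [(commute_starDefect c (star x)).eq, starDefect, mul_sub, Algebra.smul_def, star_mul,
    Algebra.smul_def, Algebra.commutes, add_sub_cancel]

theorem starDefect_mul_star_eq_zero {c : K} {x : A} (hx : starDefect A c * x = 0) :
    starDefect A c * star x = 0 := by
  have := congrArg star hx
  rwa [star_mul, star_starDefect, mul_neg, star_zero, neg_eq_zero,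
    ← (commute_starDefect c (star x)).eq] at this

theorem star_smul_of_starDefect_mul_eq_zero {c : K} {x : A} (hx : starDefect A c * x = 0) :
    star (c • x) = c • star x := by
  rw [star_smul_eq_add_starDefect_mul, starDefect_mul_star_eq_zero hx, add_zero]

theorem star_inv_smul_of_starDefect_mul_eq_zero {K A : Type*} [Field K] [Ring A] [Algebra K A]
    [StarRing A] {c : K} (hc : c ≠ 0) {x : A} (hx : starDefect A c * x = 0) :
    star (c⁻¹ • x) = c⁻¹ • star x := by
  have h : star (c • c⁻¹ • x) = c • star (c⁻¹ • x) :=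
    star_smul_of_starDefect_mul_eq_zero (by rw [mul_smul_comm, hx, smul_zero])
  rw [smul_inv_smul₀ hc] at h
  rw [h, inv_smul_smul₀ hc]

theorem starDefect_eq_zero_of_sq_eq_one {K A : Type*} [CommRing K] [NoZeroDivisors K] [Ring A]
    [Algebra K A] [StarRing A] {c : K} (hc : c ^ 2 = 1) : starDefect A c = 0 := by
  rcases sq_eq_one_iff.1 hc with rfl | rfl <;> simp [starDefect]

end StarDefect

section VaksmanSoibelman

variable {ι K A : Type*} [LinearOrder ι] [LocallyFiniteOrderBot ι] [Ring A] [StarRing A]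

/-- The sum `∑_{j<k} zⱼzⱼ*`, the correction term in the commutation of `zₖ` with its adjoint. -/
def partialNormSq (z : ι → A) (k : ι) : A := ∑ j ∈ Finset.Iio k, z j * star (z j)

/-- The Vaksman–Soibelman relations of an odd-dimensional quantum sphere, with generators indexed
by an arbitrary finite linear order and scalars in an arbitrary commutative ring. -/
structure IsVaksmanSoibelman [Fintype ι] [CommRing K] [Algebra K A] (q : K) (z : ι → A) :
    Prop where
  qCommute {i j : ι} (hij : i < j) : QCommute q (z i) (z j)
  star_qCommute {i j : ι} (hij : i ≠ j) : QCommute q (star (z j)) (z i)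
  star_mul_self (k : ι) :
    star (z k) * z k = z k * star (z k) + (1 - q ^ 2) • partialNormSq z k
  sum_mul_star : ∑ k, z k * star (z k) = 1

namespace IsVaksmanSoibelman

variable [Fintype ι] [Field K] [Algebra K A] {q : K} {z : ι → A} {i j k : ι}

theorem starDefect_mul_mul_star (h : IsVaksmanSoibelman q z) (hij : i ≠ j) :
    starDefect A q * (z i * star (z j)) = 0 := by
  have hstar := congrArg star (h.star_qCommute hij.symm).eq
  rw [star_smul_eq_add_starDefect_mul, star_mul, star_mul, star_star,
    (h.star_qCommute hij).eq] at hstar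
  exact left_eq_add.1 hstar

theorem starDefect_mul_mul_mul_star (h : IsVaksmanSoibelman q z) (hq : q ≠ 0) (hik : i ≠ k) :
    starDefect A q * (z i * (z k * star (z k))) = 0 := by
  obtain ⟨c, hc⟩ : ∃ c : K, QCommute c (z i) (z k) :=
    hik.lt_or_gt.elim (fun hlt => ⟨q, h.qCommute hlt⟩)
      fun hgt => ⟨q⁻¹, (h.qCommute hgt).symm hq⟩
  rw [← mul_assoc (z i), hc.eq, smul_mul_assoc, mul_smul_comm, mul_assoc (z k),
    (commute_starDefect q (z k)).left_comm, h.starDefect_mul_mul_star hik, mul_zero, smul_zero]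

theorem starDefect_mul_mul_mul_star_self (h : IsVaksmanSoibelman q z) (hq : q ≠ 0)
    (hq1 : q ^ 2 ≠ 1) (hik : i < k) : starDefect A q * (z i * (z i * star (z i))) = 0 := by
  have hsum : starDefect A q * (z i * partialNormSq z k)
      = starDefect A q * (z i * (z i * star (z i))) := by
    rw [partialNormSq, Finset.mul_sum, Finset.mul_sum]
    exact Finset.sum_eq_single_of_mem i (Finset.mem_Iio.2 hik)
      fun j _ hj => h.starDefect_mul_mul_mul_star hq hj.symm
  have hk := congrArg (fun x => starDefect A q * (z i * x)) (h.star_mul_self k)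
  simp only [mul_add, mul_smul_comm] at hk
  rw [← mul_assoc (z i), ← mul_assoc (starDefect A q), h.starDefect_mul_mul_star hik.ne, zero_mul,
    h.starDefect_mul_mul_mul_star hq hik.ne, zero_add, hsum] at hk
  exact (smul_eq_zero_iff_right (sub_ne_zero.2 hq1.symm)).1 hk.symm

theorem starDefect_mul (h : IsVaksmanSoibelman q z) (hq : q ≠ 0) (hik : i < k) :
    starDefect A q * z i = 0 := by
  by_cases hq1 : q ^ 2 = 1
  · rw [starDefect_eq_zero_of_sq_eq_one hq1, zero_mul]
  · rw [← mul_one (z i), ← h.sum_mul_star, Finset.mul_sum, Finset.mul_sum]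
    refine Finset.sum_eq_zero fun j _ => ?_
    rcases eq_or_ne i j with rfl | hij
    · exact h.starDefect_mul_mul_mul_star_self hq hq1 hik
    · exact h.starDefect_mul_mul_mul_star hq hij

theorem star_qCommute_star (h : IsVaksmanSoibelman q z) (hq : q ≠ 0) (hij : i < j) :
    QCommute q (star (z j)) (star (z i)) := by
  have hdefect : starDefect A q * (z j * z i) = 0 := by
    rw [(commute_starDefect q (z j)).left_comm, h.starDefect_mul hq hij, mul_zero]
  rw [QCommute, ← star_mul, (h.qCommute hij).eq, star_smul_of_starDefect_mul_eq_zero hdefect,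
    star_mul]

theorem qCommute_star (h : IsVaksmanSoibelman q z) (hq : q ≠ 0) (hij : i ≠ j) :
    QCommute q⁻¹ (z i) (star (z j)) :=
  (h.star_qCommute hij).symm hq

theorem mul_star_qCommute_of_lt (h : IsVaksmanSoibelman q z) (hji : j < i) :
    QCommute (q ^ 2) (z j * star (z j)) (z i) :=
  ((h.qCommute hji).mul_left (h.star_qCommute hji.ne')).of_eq (sq q).symm

theorem commute_mul_star_of_gt (h : IsVaksmanSoibelman q z) (hq : q ≠ 0) (hij : i < j) :
    Commute (z j * star (z j)) (z i) :=
  QCommute.one_iff_commute.1 <|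
    (((h.qCommute hij).symm hq).mul_left (h.star_qCommute hij.ne)).of_eq (inv_mul_cancel₀ hq)

theorem mul_star_qCommute_star_of_lt (h : IsVaksmanSoibelman q z) (hq : q ≠ 0) (hji : j < i) :
    QCommute (q ^ 2)⁻¹ (z j * star (z j)) (star (z i)) :=
  ((h.qCommute_star hq hji.ne).mul_left ((h.star_qCommute_star hq hji).symm hq)).of_eq
    (by rw [sq, mul_inv])

theorem star_mul_mul_star_mul_star (h : IsVaksmanSoibelman q z) (hq : q ≠ 0) (hji : j < i)
    (hjk : j < k) : star (z i) * (z j * star (z j)) * star (z k)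
      = z j * (star (z i) * star (z k)) * star (z j) := by
  rw [← mul_assoc, (h.star_qCommute hji.ne).eq, mul_assoc,
    ((h.star_qCommute_star hq hjk).symm hq).eq, smul_mul_assoc, mul_smul_comm, smul_inv_smul₀ hq]
  simp only [mul_assoc]

theorem partialNormSq_qCommute_of_le (h : IsVaksmanSoibelman q z) (hki : k ≤ i) :
    QCommute (q ^ 2) (partialNormSq z k) (z i) :=
  QCommute.sum_left fun _ hj => h.mul_star_qCommute_of_lt ((Finset.mem_Iio.1 hj).trans_le hki)

theorem partialNormSq_qCommute_star_of_le (h : IsVaksmanSoibelman q z) (hq : q ≠ 0)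
    (hki : k ≤ i) : QCommute (q ^ 2)⁻¹ (partialNormSq z k) (star (z i)) :=
  QCommute.sum_left fun _ hj =>
    h.mul_star_qCommute_star_of_lt hq ((Finset.mem_Iio.1 hj).trans_le hki)

theorem commute_partialNormSq_of_lt (h : IsVaksmanSoibelman q z) (hq : q ≠ 0) (hik : i < k) :
    Commute (partialNormSq z k) (z i) := by
  have hsplit : partialNormSq z k = (∑ j ∈ Finset.Iio k \ Finset.Iic i, z j * star (z j))
      + (partialNormSq z i + z i * star (z i)) := by
    rw [partialNormSq, partialNormSq, Finset.sum_Iio_add_eq_sum_Iic,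
      Finset.sum_sdiff fun j hj => Finset.mem_Iio.2 ((Finset.mem_Iic.1 hj).trans_lt hik)]
  have htail : Commute (∑ j ∈ Finset.Iio k \ Finset.Iic i, z j * star (z j)) (z i) :=
    Commute.sum_left _ _ _ fun j hj => h.commute_mul_star_of_gt hq (by simp_all)
  rw [hsplit]
  refine htail.add_left ?_
  rw [commute_iff_eq, add_mul, (h.partialNormSq_qCommute_of_le le_rfl).eq, mul_assoc,
    h.star_mul_self i, mul_add, mul_add, mul_smul_comm]
  module

end IsVaksmanSoibelman

end VaksmanSoibelman

section FourSphere

variable {K A : Type*} [Field K] [Ring A] [Algebra K A] [StarRing A]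

/-- The generator `a = z₁z₄* - z₂z₃*` of the quantum 4-sphere; the index of `zₖ` is `k - 1`. -/
def fourSphereA (z : Fin 4 → A) : A := z 0 * star (z 3) - z 1 * star (z 2)

/-- The generator `b = z₁z₃ + q⁻¹z₂z₄` of the quantum 4-sphere; the index of `zₖ` is `k - 1`. -/
def fourSphereB (q : K) (z : Fin 4 → A) : A := z 0 * z 2 + q⁻¹ • (z 1 * z 3)

/-- The generator `R = z₁z₁* + z₂z₂*` of the quantum 4-sphere; the index of `zₖ` is `k - 1`. -/
def fourSphereR (z : Fin 4 → A) : A := z 0 * star (z 0) + z 1 * star (z 1)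

theorem star_fourSphereA (z : Fin 4 → A) :
    star (fourSphereA z) = z 3 * star (z 0) - z 2 * star (z 1) := by
  simp [fourSphereA]

theorem partialNormSq_zero (z : Fin 4 → A) : partialNormSq z 0 = 0 := by
  rw [partialNormSq, show Finset.Iio (0 : Fin 4) = ∅ by decide, Finset.sum_empty]

theorem partialNormSq_one (z : Fin 4 → A) : partialNormSq z 1 = z 0 * star (z 0) := by
  rw [partialNormSq, show Finset.Iio (1 : Fin 4) = {0} by decide, Finset.sum_singleton]

theorem partialNormSq_two (z : Fin 4 → A) : partialNormSq z 2 = fourSphereR z := by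
  rw [partialNormSq, show Finset.Iio (2 : Fin 4) = {0, 1} by decide,
    Finset.sum_pair (by decide), fourSphereR]

theorem partialNormSq_three (z : Fin 4 → A) :
    partialNormSq z 3 = fourSphereR z + z 2 * star (z 2) := by
  rw [partialNormSq, show Finset.Iio (3 : Fin 4) = insert 2 {0, 1} by decide,
    Finset.sum_insert (by decide), Finset.sum_pair (by decide), add_comm, fourSphereR]

theorem mul_star_self_two (z : Fin 4 → A) :
    z 2 * star (z 2) = partialNormSq z 3 - fourSphereR z := by
  rw [partialNormSq_three, add_sub_cancel_left]

theorem fourSphereR_sq (z : Fin 4 → A) : fourSphereR z ^ 2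
    = fourSphereR z * (z 0 * star (z 0)) + fourSphereR z * (z 1 * star (z 1)) := by
  rw [sq, ← mul_add, ← fourSphereR]

/-- The common part, up to a scalar, of `a a*`, `a* a`, `b b*` and `b* b` that does not lie in the
subalgebra generated by the elements `zₖzₖ*`. -/
def fourSphereMixedTerm (z : Fin 4 → A) : A :=
  z 0 * z 2 * (star (z 3) * star (z 1)) + z 1 * z 3 * (star (z 2) * star (z 0))

namespace IsVaksmanSoibelman

variable {q : K} {z : Fin 4 → A}

theorem star_fourSphereB (h : IsVaksmanSoibelman q z) (hq : q ≠ 0) :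
    star (fourSphereB q z)
      = star (z 2) * star (z 0) + q⁻¹ • (star (z 3) * star (z 1)) := by
  have hdefect : starDefect A q * (z 1 * z 3) = 0 := by
    rw [← mul_assoc, h.starDefect_mul hq (show (1 : Fin 4) < 3 by decide), zero_mul]
  rw [fourSphereB, star_add, star_inv_smul_of_starDefect_mul_eq_zero hq hdefect, star_mul, star_mul]

theorem star_mul_self_zero (h : IsVaksmanSoibelman q z) :
    star (z 0) * z 0 = z 0 * star (z 0) := by
  rw [h.star_mul_self, partialNormSq_zero, smul_zero, add_zero]

theorem star_mul_self_one (h : IsVaksmanSoibelman q z) :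
    star (z 1) * z 1 = z 1 * star (z 1) + (1 - q ^ 2) • (z 0 * star (z 0)) := by
  rw [h.star_mul_self, partialNormSq_one]

theorem star_mul_self_two (h : IsVaksmanSoibelman q z) :
    star (z 2) * z 2 = partialNormSq z 3 - q ^ 2 • fourSphereR z := by
  rw [h.star_mul_self, partialNormSq_two, partialNormSq_three]
  module

theorem mul_star_self_three (h : IsVaksmanSoibelman q z) :
    z 3 * star (z 3) = 1 - partialNormSq z 3 := by
  rw [eq_sub_iff_add_eq', ← h.sum_mul_star, Fin.sum_univ_four, partialNormSq_three, fourSphereR]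

theorem star_mul_self_three (h : IsVaksmanSoibelman q z) :
    star (z 3) * z 3 = 1 - q ^ 2 • partialNormSq z 3 := by
  rw [h.star_mul_self, h.mul_star_self_three]
  module

theorem fourSphereR_qCommute_fourSphereA (h : IsVaksmanSoibelman q z) (hq : q ≠ 0) :
    QCommute (q ^ 2)⁻¹ (fourSphereR z) (fourSphereA z) := by
  have hR : ∀ {i j : Fin 4}, i < 2 → 2 ≤ j →
      QCommute (q ^ 2)⁻¹ (fourSphereR z) (z i * star (z j)) := fun hi hj => by
    rw [← partialNormSq_two]
    exact ((QCommute.one_iff_commute.2 (h.commute_partialNormSq_of_lt hq hi)).mul_right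
      (h.partialNormSq_qCommute_star_of_le hq hj)).of_eq (one_mul _)
  exact (hR (by decide) (by decide)).sub_right (hR (by decide) le_rfl)

theorem fourSphereR_qCommute_fourSphereB (h : IsVaksmanSoibelman q z) (hq : q ≠ 0) :
    QCommute (q ^ 2) (fourSphereR z) (fourSphereB q z) := by
  have hR : ∀ {i j : Fin 4}, i < 2 → 2 ≤ j →
      QCommute (q ^ 2) (fourSphereR z) (z i * z j) := fun hi hj => by
    rw [← partialNormSq_two]
    exact ((QCommute.one_iff_commute.2 (h.commute_partialNormSq_of_lt hq hi)).mul_right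
      (h.partialNormSq_qCommute_of_le hj)).of_eq (one_mul _)
  exact (hR (by decide) le_rfl).add_right ((hR (by decide) (by decide)).smul_right _)

theorem fourSphereA_qCommute_fourSphereB (h : IsVaksmanSoibelman q z) (hq : q ≠ 0) :
    QCommute (q ^ 3) (fourSphereA z) (fourSphereB q z) := by
  have h₀₃₀₂ : QCommute (q ^ 3) (z 0 * star (z 3)) (z 0 * z 2) :=
    (QCommute.mul_mul (.refl _) (h.qCommute (by decide)) (h.star_qCommute (by decide))
      (h.star_qCommute (by decide))).of_eq (by ring)
  have h₁₂₁₃ : QCommute (q ^ 3) (z 1 * star (z 2)) (z 1 * z 3) :=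
    (QCommute.mul_mul (.refl _) (h.qCommute (by decide)) (h.star_qCommute (by decide))
      (h.star_qCommute (by decide))).of_eq (by ring)
  have h₀₃₁₃ : z 0 * star (z 3) * (z 1 * z 3) = q • (z 0 * z 1 * (star (z 3) * z 3)) :=
    (h.star_qCommute (by decide)).mul_mul_mul_comm _ _
  have h₁₃₀₃ : z 1 * z 3 * (z 0 * star (z 3)) = q⁻¹ • q⁻¹ • (z 0 * z 1 * (z 3 * star (z 3))) := by
    rw [((h.qCommute (show (0 : Fin 4) < 3 by decide)).symm hq).mul_mul_mul_comm,
      ((h.qCommute (show (0 : Fin 4) < 1 by decide)).symm hq).eq, smul_mul_assoc]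
  have h₁₂₀₂ : z 1 * star (z 2) * (z 0 * z 2) = z 0 * z 1 * (star (z 2) * z 2) := by
    rw [(h.star_qCommute (show (0 : Fin 4) ≠ 2 by decide)).mul_mul_mul_comm,
      (h.qCommute (show (0 : Fin 4) < 1 by decide)).eq, smul_mul_assoc]
  have h₀₂₁₂ : z 0 * z 2 * (z 1 * star (z 2)) = q⁻¹ • (z 0 * z 1 * (z 2 * star (z 2))) :=
    ((h.qCommute (by decide)).symm hq).mul_mul_mul_comm _ _
  simp only [QCommute, fourSphereA, fourSphereB, sub_mul, mul_add, mul_sub, add_mul,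
    mul_smul_comm, smul_mul_assoc, h₀₃₀₂.eq, h₁₂₁₃.eq, h₀₃₁₃, h₁₃₀₃, h₁₂₀₂, h₀₂₁₂,
    h.star_mul_self_three, h.star_mul_self_two, h.mul_star_self_three, mul_star_self_two]
  match_scalars <;> field

theorem fourSphereA_qCommute_star_fourSphereB (h : IsVaksmanSoibelman q z) (hq : q ≠ 0) :
    QCommute q⁻¹ (fourSphereA z) (star (fourSphereB q z)) := by
  have h₀₃₃₁ : QCommute q⁻¹ (z 0 * star (z 3)) (star (z 3) * star (z 1)) :=
    (QCommute.mul_mul (h.qCommute_star hq (by decide)) (h.qCommute_star hq (by decide))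
      (.refl _) (h.star_qCommute_star hq (by decide))).of_eq (by field)
  have h₁₂₂₀ : QCommute q⁻¹ (z 1 * star (z 2)) (star (z 2) * star (z 0)) :=
    (QCommute.mul_mul (h.qCommute_star hq (by decide)) (h.qCommute_star hq (by decide))
      (.refl _) (h.star_qCommute_star hq (by decide))).of_eq (by field)
  have h₀₃₂₀ : z 0 * star (z 3) * (star (z 2) * star (z 0))
      = z 0 * (star (z 3) * star (z 2)) * star (z 0) := by
    simp only [mul_assoc]
  have h₂₀₀₃ : star (z 2) * star (z 0) * (z 0 * star (z 3))
      = q⁻¹ • (z 0 * (star (z 3) * star (z 2)) * star (z 0)) := by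
    rw [mul_assoc, ← mul_assoc (star (z 0)), h.star_mul_self_zero, ← mul_assoc,
      h.star_mul_mul_star_mul_star hq (by decide) (by decide),
      ((h.star_qCommute_star hq (show (2 : Fin 4) < 3 by decide)).symm hq).eq,
      mul_smul_comm, smul_mul_assoc]
  have h₁₂₃₁ : z 1 * star (z 2) * (star (z 3) * star (z 1))
      = q⁻¹ • (z 1 * (star (z 3) * star (z 2)) * star (z 1)) := by
    rw [((h.star_qCommute_star hq (show (2 : Fin 4) < 3 by decide)).symm hq).mul_mul_mul_comm]
    simp only [mul_assoc]
  have h₃₁₁₂ : star (z 3) * star (z 1) * (z 1 * star (z 2))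
      = z 1 * (star (z 3) * star (z 2)) * star (z 1)
        + (1 - q ^ 2) • (z 0 * (star (z 3) * star (z 2)) * star (z 0)) := by
    rw [mul_assoc, ← mul_assoc (star (z 1)), h.star_mul_self_one, ← mul_assoc, mul_add, add_mul,
      mul_smul_comm, smul_mul_assoc, h.star_mul_mul_star_mul_star hq (by decide) (by decide),
      h.star_mul_mul_star_mul_star hq (by decide) (by decide)]
  rw [h.star_fourSphereB hq]
  simp only [QCommute, fourSphereA, sub_mul, mul_add, mul_sub, add_mul,
    mul_smul_comm, smul_mul_assoc, h₀₃₃₁.eq, h₁₂₂₀.eq, h₀₃₂₀, h₂₀₀₃, h₁₂₃₁, h₃₁₁₂]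
  match_scalars <;> field

theorem fourSphereA_mul_star (h : IsVaksmanSoibelman q z) (hq : q ≠ 0) :
    fourSphereA z * star (fourSphereA z)
      = (1 - q ^ 2 • partialNormSq z 3) * (z 0 * star (z 0))
        + (partialNormSq z 3 - q ^ 2 • fourSphereR z) * (z 1 * star (z 1))
        - q • fourSphereMixedTerm z := by
  have hP₀ := h.commute_partialNormSq_of_lt hq (show (0 : Fin 4) < 3 by decide)
  have hP₁ := h.commute_partialNormSq_of_lt hq (show (1 : Fin 4) < 3 by decide)
  have hR₁ := h.commute_partialNormSq_of_lt hq (show (1 : Fin 4) < 2 by decide)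
  rw [partialNormSq_two] at hR₁
  have h₀₃₃₀ : z 0 * star (z 3) * (z 3 * star (z 0))
      = (1 - q ^ 2 • partialNormSq z 3) * (z 0 * star (z 0)) := by
    have hcomm := (Commute.one_left (z 0)).sub_left (hP₀.smul_left (q ^ 2))
    rw [mul_assoc, ← mul_assoc (star (z 3)), h.star_mul_self_three, ← mul_assoc, ← hcomm.eq,
      mul_assoc]
  have h₁₂₂₁ : z 1 * star (z 2) * (z 2 * star (z 1))
      = (partialNormSq z 3 - q ^ 2 • fourSphereR z) * (z 1 * star (z 1)) := by
    have hcomm := hP₁.sub_left (hR₁.smul_left (q ^ 2))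
    rw [mul_assoc, ← mul_assoc (star (z 2)), h.star_mul_self_two, ← mul_assoc, ← hcomm.eq,
      mul_assoc]
  rw [star_fourSphereA, fourSphereA, sub_mul, mul_sub, mul_sub, h₀₃₃₀, h₁₂₂₁,
    (h.star_qCommute (show (2 : Fin 4) ≠ 3 by decide)).mul_mul_mul_comm,
    (h.star_qCommute (show (3 : Fin 4) ≠ 2 by decide)).mul_mul_mul_comm, fourSphereMixedTerm]
  module

theorem star_fourSphereA_mul (h : IsVaksmanSoibelman q z) (hq : q ≠ 0) :
    star (fourSphereA z) * fourSphereA z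
      = (q ^ 2)⁻¹ • ((1 - partialNormSq z 3) * (z 0 * star (z 0))
          + (partialNormSq z 3 - fourSphereR z)
            * (z 1 * star (z 1) + (1 - q ^ 2) • (z 0 * star (z 0))))
        - q⁻¹ • fourSphereMixedTerm z := by
  have h₃₀₀₃ : z 3 * star (z 0) * (z 0 * star (z 3))
      = (q ^ 2)⁻¹ • ((1 - partialNormSq z 3) * (z 0 * star (z 0))) := by
    rw [mul_assoc, ← mul_assoc (star (z 0)), h.star_mul_self_zero,
      (h.mul_star_qCommute_star_of_lt hq (by decide)).eq, mul_smul_comm, ← mul_assoc,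
      h.mul_star_self_three]
  have h₂₁₁₂ : z 2 * star (z 1) * (z 1 * star (z 2))
      = (q ^ 2)⁻¹ • ((partialNormSq z 3 - fourSphereR z)
          * (z 1 * star (z 1) + (1 - q ^ 2) • (z 0 * star (z 0)))) := by
    have hcomm := (h.mul_star_qCommute_star_of_lt hq (show (1 : Fin 4) < 2 by decide)).add_left
      ((h.mul_star_qCommute_star_of_lt hq (show (0 : Fin 4) < 2 by decide)).smul_left (1 - q ^ 2))
    rw [mul_assoc, ← mul_assoc (star (z 1)), h.star_mul_self_one, hcomm.eq, mul_smul_comm,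
      ← mul_assoc, mul_star_self_two]
  have h₃₀₁₂ : z 3 * star (z 0) * (z 1 * star (z 2))
      = q⁻¹ • (z 1 * z 3 * (star (z 2) * star (z 0))) := by
    rw [(h.star_qCommute (show (1 : Fin 4) ≠ 0 by decide)).mul_mul_mul_comm,
      ((h.qCommute (show (1 : Fin 4) < 3 by decide)).symm hq).eq,
      ((h.star_qCommute_star hq (show (0 : Fin 4) < 2 by decide)).symm hq).eq, mul_smul_comm,
      smul_mul_assoc, smul_inv_smul₀ hq]
  have h₂₁₀₃ : z 2 * star (z 1) * (z 0 * star (z 3))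
      = q⁻¹ • (z 0 * z 2 * (star (z 3) * star (z 1))) := by
    rw [(h.star_qCommute (show (0 : Fin 4) ≠ 1 by decide)).mul_mul_mul_comm,
      ((h.qCommute (show (0 : Fin 4) < 2 by decide)).symm hq).eq,
      ((h.star_qCommute_star hq (show (1 : Fin 4) < 3 by decide)).symm hq).eq, mul_smul_comm,
      smul_mul_assoc, smul_inv_smul₀ hq]
  rw [star_fourSphereA, fourSphereA, sub_mul, mul_sub, mul_sub, h₃₀₀₃, h₂₁₁₂, h₃₀₁₂, h₂₁₀₃,
    fourSphereMixedTerm]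
  module

theorem fourSphereB_mul_star (h : IsVaksmanSoibelman q z) (hq : q ≠ 0) :
    fourSphereB q z * star (fourSphereB q z)
      = (partialNormSq z 3 - fourSphereR z) * (z 0 * star (z 0))
        + (q ^ 2)⁻¹ • ((1 - partialNormSq z 3) * (z 1 * star (z 1)))
        + q⁻¹ • fourSphereMixedTerm z := by
  have h₀₂₂₀ : z 0 * z 2 * (star (z 2) * star (z 0))
      = (partialNormSq z 3 - fourSphereR z) * (z 0 * star (z 0)) := by
    rw [mul_assoc, ← mul_assoc (z 2), (h.commute_mul_star_of_gt hq (by decide)).symm.left_comm,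
      mul_star_self_two]
  have h₁₃₃₁ : z 1 * z 3 * (star (z 3) * star (z 1))
      = (1 - partialNormSq z 3) * (z 1 * star (z 1)) := by
    rw [mul_assoc, ← mul_assoc (z 3), (h.commute_mul_star_of_gt hq (by decide)).symm.left_comm,
      h.mul_star_self_three]
  rw [h.star_fourSphereB hq, fourSphereB, fourSphereMixedTerm]
  simp only [mul_add, add_mul, mul_smul_comm, smul_mul_assoc, h₀₂₂₀, h₁₃₃₁]
  module

theorem star_fourSphereB_mul (h : IsVaksmanSoibelman q z) (hq : q ≠ 0) :
    star (fourSphereB q z) * fourSphereB q z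
      = q ^ 2 • ((partialNormSq z 3 - q ^ 2 • fourSphereR z) * (z 0 * star (z 0)))
        + (1 - q ^ 2 • partialNormSq z 3)
          * (z 1 * star (z 1) + (1 - q ^ 2) • (z 0 * star (z 0)))
        + q ^ 3 • fourSphereMixedTerm z := by
  have h₂₀₀₂ : star (z 2) * star (z 0) * (z 0 * z 2)
      = q ^ 2 • ((partialNormSq z 3 - q ^ 2 • fourSphereR z) * (z 0 * star (z 0))) := by
    rw [mul_assoc, ← mul_assoc (star (z 0)), h.star_mul_self_zero,
      (h.mul_star_qCommute_of_lt (by decide)).eq, mul_smul_comm, ← mul_assoc, h.star_mul_self_two]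
  have h₃₁₁₃ : star (z 3) * star (z 1) * (z 1 * z 3)
      = q ^ 2 • ((1 - q ^ 2 • partialNormSq z 3)
          * (z 1 * star (z 1) + (1 - q ^ 2) • (z 0 * star (z 0)))) := by
    have hcomm := (h.mul_star_qCommute_of_lt (show (1 : Fin 4) < 3 by decide)).add_left
      ((h.mul_star_qCommute_of_lt (show (0 : Fin 4) < 3 by decide)).smul_left (1 - q ^ 2))
    rw [mul_assoc, ← mul_assoc (star (z 1)), h.star_mul_self_one, hcomm.eq, mul_smul_comm,
      ← mul_assoc, h.star_mul_self_three]
  have h₂₀₁₃ : QCommute (q ^ 4) (star (z 2) * star (z 0)) (z 1 * z 3) :=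
    (QCommute.mul_mul (h.star_qCommute (by decide)) (h.star_qCommute (by decide))
      (h.star_qCommute (by decide)) (h.star_qCommute (by decide))).of_eq (by ring)
  have h₃₁₀₂ : QCommute (q ^ 4) (star (z 3) * star (z 1)) (z 0 * z 2) :=
    (QCommute.mul_mul (h.star_qCommute (by decide)) (h.star_qCommute (by decide))
      (h.star_qCommute (by decide)) (h.star_qCommute (by decide))).of_eq (by ring)
  rw [h.star_fourSphereB hq, fourSphereB, fourSphereMixedTerm]
  simp only [mul_add, add_mul, mul_smul_comm, smul_mul_assoc, h₂₀₀₂, h₃₁₁₃, h₂₀₁₃.eq, h₃₁₀₂.eq]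
  match_scalars <;> field

theorem fourSphereA_mul_star_add_fourSphereB_mul_star (h : IsVaksmanSoibelman q z)
    (hq : q ≠ 0) :
    fourSphereA z * star (fourSphereA z) + q ^ 2 • (fourSphereB q z * star (fourSphereB q z))
      = fourSphereR z * (1 - q ^ 2 • fourSphereR z) := by
  rw [h.fourSphereA_mul_star hq, h.fourSphereB_mul_star hq, mul_sub, mul_one, mul_smul_comm, ← sq,
    fourSphereR_sq]
  nth_rw 3 [fourSphereR]
  simp only [sub_mul, one_mul, smul_mul_assoc]
  match_scalars <;> field

theorem fourSphereA_mul_star_eq_smul_star_mul_add (h : IsVaksmanSoibelman q z) (hq : q ≠ 0) :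
    fourSphereA z * star (fourSphereA z)
      = q ^ 2 • (star (fourSphereA z) * fourSphereA z) + (1 - q ^ 2) • fourSphereR z ^ 2 := by
  rw [h.fourSphereA_mul_star hq, h.star_fourSphereA_mul hq, fourSphereR_sq]
  simp only [sub_mul, mul_add, one_mul, smul_mul_assoc, mul_smul_comm]
  match_scalars <;> field

theorem star_fourSphereB_mul_eq_smul_mul_star_add (h : IsVaksmanSoibelman q z) (hq : q ≠ 0) :
    star (fourSphereB q z) * fourSphereB q z
      = q ^ 4 • (fourSphereB q z * star (fourSphereB q z)) + (1 - q ^ 2) • fourSphereR z := by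
  rw [h.star_fourSphereB_mul hq, h.fourSphereB_mul_star hq]
  nth_rw 3 [fourSphereR]
  simp only [sub_mul, mul_add, one_mul, smul_mul_assoc, mul_smul_comm]
  match_scalars <;> field

end IsVaksmanSoibelman

end FourSphere

theorem quantum4Sphere_relations_general {K A : Type*} [Field K] [Ring A] [Algebra K A]
    [StarRing A] {q : K} (hq : q ≠ 0) {z : Fin 4 → A} (h : IsVaksmanSoibelman q z) :
    ∀ a b R : A,
      a = z 0 * star (z 3) - z 1 * star (z 2) →
      b = z 0 * z 2 + q⁻¹ • (z 1 * z 3) →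
      R = z 0 * star (z 0) + z 1 * star (z 1) →
      R * a = (q ^ 2)⁻¹ • (a * R) ∧
      R * b = q ^ 2 • (b * R) ∧
      a * b = q ^ 3 • (b * a) ∧
      a * star b = q⁻¹ • (star b * a) ∧
      a * star a + q ^ 2 • (b * star b) = R * (1 - q ^ 2 • R) ∧
      a * star a = q ^ 2 • (star a * a) + (1 - q ^ 2) • R ^ 2 ∧
      star b * b = q ^ 4 • (b * star b) + (1 - q ^ 2) • R := by
  rintro _ _ _ rfl rfl rfl
  exact ⟨h.fourSphereR_qCommute_fourSphereA hq, h.fourSphereR_qCommute_fourSphereB hq,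
    h.fourSphereA_qCommute_fourSphereB hq, h.fourSphereA_qCommute_star_fourSphereB hq,
    h.fourSphereA_mul_star_add_fourSphereB_mul_star hq,
    h.fourSphereA_mul_star_eq_smul_star_mul_add hq,
    h.star_fourSphereB_mul_eq_smul_mul_star_add hq⟩

/-- The generators `a = z₁z₄* - z₂z₃*`, `b = z₁z₃ + q⁻¹z₂z₄`, `R = z₁z₁* + z₂z₂*` of the
quantum 4-sphere satisfy the relations of Bonechi–Ciccoli–Tarlini. -/
theorem quantum4Sphere_relations {A : Type*} [Ring A] [Algebra ℂ A] [StarRing A]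
    (q : ℝ) (hq : q ∈ Set.Ioo (0 : ℝ) 1) (z₁ z₂ z₃ z₄ : A)
    (hVS : VSRel q ![z₁, z₂, z₃, z₄]) :
    ∀ a b R : A,
      a = z₁ * star z₄ - z₂ * star z₃ →
      b = z₁ * z₃ + (q : ℂ)⁻¹ • (z₂ * z₄) →
      R = z₁ * star z₁ + z₂ * star z₂ →
      R * a = (((q : ℂ) ^ 2)⁻¹) • (a * R) ∧
      R * b = ((q : ℂ) ^ 2) • (b * R) ∧
      a * b = ((q : ℂ) ^ 3) • (b * a) ∧
      a * star b = ((q : ℂ)⁻¹) • (star b * a) ∧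
      a * star a + ((q : ℂ) ^ 2) • (b * star b) = R * (1 - ((q : ℂ) ^ 2) • R) ∧
      a * star a = ((q : ℂ) ^ 2) • (star a * a) + (1 - (q : ℂ) ^ 2) • R ^ 2 ∧
      star b * b = ((q : ℂ) ^ 4) • (b * star b) + (1 - (q : ℂ) ^ 2) • R :=
  quantum4Sphere_relations_general (by exact_mod_cast hq.1.ne')
    ⟨hVS.1 _ _, hVS.2.1 _ _, hVS.2.2.1, hVS.2.2.2⟩
end

section
/- Let q ∈ (0,1) be a real number. Then the series over m ∈ ℕ with terms 1 − (2 + q⁻² − q²)·q^{2(m+1)}·(1 − q^{2(m+1)}) − (1 − q^{2(m+1)})² − q^{4m} is summable, and its sum equals −2. -/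
/-!
With `x = q ^ 2`, the constant terms of the summand cancel and what is left is a combination of
the two normalised geometric series `∑ (1 - x) x ^ m = 1` and `∑ (1 - x ^ 2) (x ^ 2) ^ m = 1`,
with coefficients `-(1 + x)` and `-(1 - x)`. These add up to `-2`, whatever `x` is.
-/

theorem hasSum_one_sub_mul_geometric {R : Type*} [NormedRing R] [HasSummableGeomSeries R] {x : R}
    (hx : ‖x‖ < 1) : HasSum (fun m : ℕ => (1 - x) * x ^ m) 1 := by
  simpa only [mul_neg_geom_series x hx] using
    (summable_geometric_of_norm_lt_one hx).hasSum.mul_left (1 - x)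

theorem indexPairing_term_eq {K : Type*} [Field K] {q : K} (hq : q ≠ 0) (m : ℕ) :
    1 - (2 + (q ^ 2)⁻¹ - q ^ 2) * q ^ (2 * (m + 1)) * (1 - q ^ (2 * (m + 1)))
        - (1 - q ^ (2 * (m + 1))) ^ 2 - q ^ (4 * m) =
      -(1 + q ^ 2) * ((1 - q ^ 2) * (q ^ 2) ^ m)
        + -(1 - q ^ 2) * ((1 - q ^ 4) * (q ^ 4) ^ m) := by
  field_simp
  ring

theorem indexPairing_series_hasSum_general {K : Type*} [NormedField K] {q : K} (hq₀ : q ≠ 0)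
    (hq₁ : ‖q‖ < 1) :
    HasSum
      (fun m : ℕ =>
        1 - (2 + (q ^ 2)⁻¹ - q ^ 2) * q ^ (2 * (m + 1)) * (1 - q ^ (2 * (m + 1)))
          - (1 - q ^ (2 * (m + 1))) ^ 2 - q ^ (4 * m))
      (-2 : K) := by
  have norm_pow_lt_one {n : ℕ} (hn : n ≠ 0) : ‖q ^ n‖ < 1 := by
    simpa only [norm_pow] using pow_lt_one₀ (norm_nonneg q) hq₁ hn
  have hasSum_sq := hasSum_one_sub_mul_geometric (norm_pow_lt_one two_ne_zero)
  have hasSum_fourth := hasSum_one_sub_mul_geometric (norm_pow_lt_one four_ne_zero)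
  have coeff_sum : (-2 : K) = -(1 + q ^ 2) * 1 + -(1 - q ^ 2) * 1 := by ring
  simp only [indexPairing_term_eq hq₀, coeff_sum]
  exact (hasSum_sq.mul_left (-(1 + q ^ 2))).add (hasSum_fourth.mul_left (-(1 - q ^ 2)))

/-- The index-pairing series
`∑_{m≥0} (1 - (2 + q⁻² - q²) q^{2(m+1)} (1 - q^{2(m+1)}) - (1 - q^{2(m+1)})² - q^{4m})`
is summable with sum `-2`, for `q ∈ (0,1)`. -/
theorem indexPairing_series_hasSum (q : ℝ) (hq : q ∈ Set.Ioo (0 : ℝ) 1) :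
    HasSum
      (fun m : ℕ =>
        1 - (2 + (q ^ 2)⁻¹ - q ^ 2) * q ^ (2 * (m + 1)) * (1 - q ^ (2 * (m + 1)))
          - (1 - q ^ (2 * (m + 1))) ^ 2 - q ^ (4 * m))
      (-2 : ℝ) :=
  indexPairing_series_hasSum_general hq.1.ne' ((Real.norm_of_nonneg hq.1.le).trans_lt hq.2)
end
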